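/- The functions |λ|_p^{d/2}(π_{(ξ,η,λ)})_{hh'} with ‖(ξ,η,λ)‖_p ≤ p^n, (ξ,η) ∈ Q_p^{2d}/p^{v(λ)}Z_p^{2d}, h,h' ∈ Z_p^d/p^{-v(λ)}Z_p^d, form an orthonormal family in L²(H_d) of cardinality p^{n(2d+1)}, and hence an orthonormal basis of the space D_n(H_d) of right-H_d(p^nZ_p)-invariant functions. -/

import Mathlib

noncomputable section

variable (p : ℕ) [Fact p.Prime] (d : ℕ)

def dotZ (x y : Fin d → ℤ_[p]) : ℤ_[p] := ∑ i, x i * y i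

/-- The Heisenberg group `H_d(ℤ_p)`: the set `ℤ_p^{2d+1}` written as triples `(x, y, z)`. -/
@[ext] structure Heis where
  x : Fin d → ℤ_[p]
  y : Fin d → ℤ_[p]
  z : ℤ_[p]

variable {p d}

instance : Mul (Heis p d) :=
  ⟨fun g g' => ⟨g.x + g'.x, g.y + g'.y, g.z + g'.z + dotZ p d g.x g'.y⟩⟩
instance : One (Heis p d) := ⟨⟨0, 0, 0⟩⟩
instance : Inv (Heis p d) :=
  ⟨fun g => ⟨-g.x, -g.y, -g.z + dotZ p d g.x g.y⟩⟩

lemma heis_mul_def (g g' : Heis p d) :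
    g * g' = ⟨g.x + g'.x, g.y + g'.y, g.z + g'.z + dotZ p d g.x g'.y⟩ := rfl
lemma heis_one_def : (1 : Heis p d) = ⟨0, 0, 0⟩ := rfl
lemma heis_inv_def (g : Heis p d) :
    g⁻¹ = ⟨-g.x, -g.y, -g.z + dotZ p d g.x g.y⟩ := rfl

instance heisGroup : Group (Heis p d) :=
  Group.ofLeftAxioms
    (by
      rintro ⟨a1, a2, a3⟩ ⟨b1, b2, b3⟩ ⟨c1, c2, c3⟩
      simp only [heis_mul_def, dotZ, Pi.add_apply, add_mul, mul_add,
        Finset.sum_add_distrib, Heis.mk.injEq]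
      refine ⟨add_assoc _ _ _, add_assoc _ _ _, by ring⟩)
    (by
      rintro ⟨a1, a2, a3⟩
      simp [heis_mul_def, heis_one_def, dotZ])
    (by
      rintro ⟨a1, a2, a3⟩
      simp only [heis_mul_def, heis_inv_def, heis_one_def, dotZ,
        Pi.neg_apply, Heis.mk.injEq, neg_add_cancel]
      refine ⟨trivial, trivial, by ring_nf; simp⟩)

open MeasureTheory Classical

variable (p d)

/-- Truncation of a `p`-adic number to a `p`-adic integer (`0` if it is not an integer). -/
def padicToInt (x : ℚ_[p]) : ℤ_[p] := if h : ‖x‖ ≤ 1 then ⟨x, h⟩ else 0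

/-- The `p`-adic fractional part `{x}_p`, as a rational number. -/
def padicFract (x : ℚ_[p]) : ℚ :=
  ((padicToInt p (x * (p : ℚ_[p]) ^ (-x.valuation).toNat)).appr (-x.valuation).toNat : ℚ) /
    (p : ℚ) ^ (-x.valuation).toNat

/-- The additive character `x ↦ e^{2πi {x}_p}` of `ℚ_p`. -/
def eChar (x : ℚ_[p]) : ℂ := Complex.exp (2 * Real.pi * Complex.I * (padicFract p x : ℂ))

instance : MeasurableSpace ℤ_[p] := borel _
instance : BorelSpace ℤ_[p] := ⟨rfl⟩
instance : TopologicalSpace (Heis p d) :=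
  TopologicalSpace.induced (fun g => (g.x, g.y, g.z)) inferInstance
instance : MeasurableSpace (Heis p d) := borel _
instance : BorelSpace (Heis p d) := ⟨rfl⟩

/-- Pairing of a `ℚ_p`-covector with a `ℤ_p`-vector. -/
def dotQZ (ξ : Fin d → ℚ_[p]) (x : Fin d → ℤ_[p]) : ℚ_[p] := ∑ i, ξ i * (x i : ℚ_[p])

/-- The Schrödinger-type realization
`π_{(ξ,η,λ)}(x,y,z)φ(u) = e^{2πi{ξ·x + η·y + λ(z + u·y)}_p} φ(u + x)`. -/
def piAct (ξ η : Fin d → ℚ_[p]) (lam : ℚ_[p]) (g : Heis p d)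
    (φ : (Fin d → ℤ_[p]) → ℂ) : (Fin d → ℤ_[p]) → ℂ := fun u =>
  eChar p (dotQZ p d ξ g.x + dotQZ p d η g.y +
      lam * ((g.z : ℚ_[p]) + (dotZ p d u g.y : ℚ_[p]))) * φ (u + g.x)

/-- `φ` is invariant under translations by `p^n ℤ_p^d`. -/
def InvariantUnder (n : ℕ) (φ : (Fin d → ℤ_[p]) → ℂ) : Prop :=
  ∀ u v : Fin d → ℤ_[p], (∀ i, ‖v i‖ ≤ (p : ℝ) ^ (-(n : ℤ))) → φ (u + v) = φ u

/-- The indicator function of the coset `h + p^n ℤ_p^d`. -/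
def indC (n : ℕ) (h : Fin d → ℤ_[p]) : (Fin d → ℤ_[p]) → ℂ :=
  Set.indicator {u | ∀ i, ‖u i - h i‖ ≤ (p : ℝ) ^ (-(n : ℤ))} fun _ => (1 : ℂ)

/-- `n_λ = -v(λ)`, so that `|λ|_p = p^{n_λ}`. -/
def nLam (lam : ℚ_[p]) : ℕ := (-lam.valuation).toNat

/-- The matrix coefficient
`(π_{(ξ,η,λ)})_{hh'}(x,y,z) = e^{2πi{ξ·x+η·y+λ(z+h'·y)}_p} 1_{h-h'+p^{-v(λ)}ℤ_p^d}(x)`. -/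
def matCoeff (ξ η : Fin d → ℚ_[p]) (lam : ℚ_[p]) (h h' : Fin d → ℤ_[p])
    (g : Heis p d) : ℂ :=
  eChar p (dotQZ p d ξ g.x + dotQZ p d η g.y +
      lam * ((g.z : ℚ_[p]) + (dotZ p d h' g.y : ℚ_[p]))) *
    indC p d (nLam p lam) (h - h') g.x

/-- The normalized matrix coefficient `|λ|_p^{d/2} (π_{(ξ,η,λ)})_{hh'}`. -/
def matCoeffN (ξ η : Fin d → ℚ_[p]) (lam : ℚ_[p]) (h h' : Fin d → ℕ)
    (g : Heis p d) : ℂ :=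
  (Real.sqrt ((p : ℝ) ^ (nLam p lam * d)) : ℂ) *
    matCoeff p d ξ η lam (fun i => ((h i : ℕ) : ℤ_[p])) (fun i => ((h' i : ℕ) : ℤ_[p])) g

/-- The index set of the family: `(ξ,η,λ)` runs over the canonical representatives of the
unitary dual with `‖(ξ,η,λ)‖_p ≤ p^n` and `(ξ,η) ∈ ℚ_p^{2d}/p^{v(λ)}ℤ_p^{2d}`, and `h, h'`
over representatives of `ℤ_p^d/p^{-v(λ)}ℤ_p^d`. -/
def GoodIdx (n : ℕ)
    (t : (Fin d → ℚ_[p]) × (Fin d → ℚ_[p]) × ℚ_[p] × (Fin d → ℕ) × (Fin d → ℕ)) : Prop :=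
  (t.2.2.1 = 1 ∨ (1 < ‖t.2.2.1‖ ∧ (padicFract p t.2.2.1 : ℚ_[p]) = t.2.2.1)) ∧
    ‖t.2.2.1‖ ≤ (p : ℝ) ^ (n : ℤ) ∧
    (∀ i, ‖t.1 i‖ ≤ (p : ℝ) ^ (n : ℤ) ∧
      (padicFract p (t.1 i * (p : ℚ_[p]) ^ nLam p t.2.2.1) : ℚ_[p]) =
        t.1 i * (p : ℚ_[p]) ^ nLam p t.2.2.1) ∧
    (∀ i, ‖t.2.1 i‖ ≤ (p : ℝ) ^ (n : ℤ) ∧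
      (padicFract p (t.2.1 i * (p : ℚ_[p]) ^ nLam p t.2.2.1) : ℚ_[p]) =
        t.2.1 i * (p : ℚ_[p]) ^ nLam p t.2.2.1) ∧
    (∀ i, t.2.2.2.1 i < p ^ nLam p t.2.2.1) ∧ (∀ i, t.2.2.2.2 i < p ^ nLam p t.2.2.1)

/-- The space `D_n(H_d)` of right-`H_d(p^n ℤ_p)`-invariant functions. -/
def Dn (n : ℕ) : Submodule ℂ (Heis p d → ℂ) where
  carrier := {f | ∀ g h : Heis p d,
    ((∀ i, ‖h.x i‖ ≤ (p : ℝ) ^ (-(n : ℤ))) ∧ (∀ i, ‖h.y i‖ ≤ (p : ℝ) ^ (-(n : ℤ))) ∧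
      ‖h.z‖ ≤ (p : ℝ) ^ (-(n : ℤ))) → f (g * h) = f g}
  add_mem' := fun hf hg g h hh => by simp only [Pi.add_apply, hf g h hh, hg g h hh]
  zero_mem' := fun g h hh => rfl
  smul_mem' := fun c f hf g h hh => by simp only [Pi.smul_apply, hf g h hh]

lemma nsub {x y : ℚ_[p]} {c : ℝ} (hx : ‖x‖ ≤ c) (hy : ‖y‖ ≤ c) : ‖x - y‖ ≤ c := by
  rw [sub_eq_add_neg]
  exact (Padic.nonarchimedean _ _).trans (max_le hx (by rwa [norm_neg]))

lemma nadd {x y : ℚ_[p]} {c : ℝ} (hx : ‖x‖ ≤ c) (hy : ‖y‖ ≤ c) : ‖x + y‖ ≤ c :=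
  (Padic.nonarchimedean _ _).trans (max_le hx hy)

lemma pf_form (x : ℚ_[p]) : ∃ a m : ℕ, a < p ^ m ∧ padicFract p x = (a : ℚ) / (p : ℚ) ^ m :=
  ⟨_, _, PadicInt.appr_lt _ _, rfl⟩

lemma pf_nonneg (x : ℚ_[p]) : 0 ≤ padicFract p x := by
  unfold padicFract; positivity

lemma pf_lt_one (x : ℚ_[p]) : padicFract p x < 1 := by
  obtain ⟨a, m, h, e⟩ := pf_form p x
  have hp : 0 < p := (Fact.out : p.Prime).pos
  rw [e, div_lt_one (by positivity)]
  exact_mod_cast h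

lemma pnorm_pow (m : ℕ) : ‖(p : ℚ_[p]) ^ m‖ = (p : ℝ) ^ (-(m : ℤ)) := by
  simp

lemma ppos : (0 : ℝ) < p := by exact_mod_cast (Fact.out : p.Prime).pos

lemma pne : (p : ℚ_[p]) ≠ 0 := by exact_mod_cast (Fact.out : p.Prime).ne_zero

lemma pone : (1 : ℝ) < p := by exact_mod_cast (Fact.out : p.Prime).one_lt

lemma norm_mul_pow_le {x : ℚ_[p]} {m : ℕ} (k : ℤ) :
    ‖x * (p : ℚ_[p]) ^ m‖ ≤ (p : ℝ) ^ (k - m) ↔ ‖x‖ ≤ (p : ℝ) ^ k := by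
  rw [norm_mul, pnorm_pow, zpow_sub₀ (ppos p).ne', zpow_neg, div_eq_mul_inv]
  have := zpow_pos (ppos p) m
  exact mul_le_mul_iff_left₀ (by positivity)

lemma padicToInt_coe {x : ℚ_[p]} (h : ‖x‖ ≤ 1) : (padicToInt p x : ℚ_[p]) = x := by
  have : padicToInt p x = ⟨x, h⟩ := dif_pos h
  rw [this]

lemma pf_sub (x : ℚ_[p]) : ‖x - (padicFract p x : ℚ_[p])‖ ≤ 1 := by
  set m := (-x.valuation).toNat with hm
  have h1 : ‖x * (p : ℚ_[p]) ^ m‖ ≤ 1 := by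
    have := (norm_mul_pow_le p (x := x) (m := m) (m : ℤ)).2 (by
      by_cases hx : x = 0
      · simp [hx]
      · rw [Padic.norm_eq_zpow_neg_valuation hx]
        exact zpow_le_zpow_right₀ (pone p).le (by omega))
    simpa using this
  have h2 := PadicInt.appr_spec m (padicToInt p (x * (p : ℚ_[p]) ^ m))
  rw [← PadicInt.norm_le_pow_iff_mem_span_pow, PadicInt.norm_def] at h2
  have h3 := (norm_mul_pow_le p (x := x - (padicFract p x : ℚ_[p])) (m := m) 0).1 (by
    rw [zero_sub]
    convert h2 using 2
    rw [sub_mul]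
    have e : padicFract p x =
      (((padicToInt p (x * (p : ℚ_[p]) ^ m)).appr m : ℕ) : ℚ) / (p : ℚ) ^ m := rfl
    rw [e]
    push_cast
    rw [div_mul_cancel₀ _ (pow_ne_zero _ (pne p)), padicToInt_coe p h1])
  simpa using h3

lemma rat_int {q : ℚ} {a : ℤ} {m : ℕ} (e : q = (a : ℚ) / (p : ℚ) ^ m)
    (h : ‖(q : ℚ_[p])‖ ≤ 1) : ∃ k : ℤ, q = k := by
  have h1 := (norm_mul_pow_le p (x := (q : ℚ_[p])) (m := m) 0).2 (by simpa using h)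
  have hp : (p : ℚ) ≠ 0 := by exact_mod_cast (Fact.out : p.Prime).ne_zero
  have : (q : ℚ_[p]) * (p : ℚ_[p]) ^ m = (a : ℚ_[p]) := by
    rw [e]; push_cast
    rw [div_mul_cancel₀ _ (pow_ne_zero _ (pne p))]
  rw [this, zero_sub, Padic.norm_int_le_pow_iff_dvd] at h1
  obtain ⟨k, hk⟩ := h1
  refine ⟨k, ?_⟩
  rw [e, hk]; push_cast
  field_simp

lemma eChar_add (x y : ℚ_[p]) : eChar p (x + y) = eChar p x * eChar p y := by
  obtain ⟨a, m, -, ea⟩ := pf_form p x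
  obtain ⟨b, l, -, eb⟩ := pf_form p y
  obtain ⟨c, r, -, ec⟩ := pf_form p (x + y)
  have hp : (p : ℚ) ≠ 0 := by exact_mod_cast (Fact.out : p.Prime).ne_zero
  have hn : ‖((padicFract p x + padicFract p y - padicFract p (x + y) : ℚ) : ℚ_[p])‖ ≤ 1 := by
    have : ((padicFract p x + padicFract p y - padicFract p (x + y) : ℚ) : ℚ_[p]) =
      ((x + y) - padicFract p (x + y)) - (x - padicFract p x) - (y - padicFract p y) := by
      push_cast; ring
    rw [this]
    exact nsub p (nsub p (pf_sub p _) (pf_sub p _)) (pf_sub p _)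
  obtain ⟨k, hk⟩ := rat_int p (a := (a * p ^ (l + r) + b * p ^ (m + r) - c * p ^ (m + l) : ℤ))
    (m := m + l + r) (by
      rw [ea, eb, ec]; push_cast; field_simp; ring) hn
  unfold eChar
  rw [← Complex.exp_add, Complex.exp_eq_exp_iff_exists_int]
  refine ⟨-k, ?_⟩
  have : (padicFract p (x + y) : ℂ) = padicFract p x + padicFract p y - k := by
    have : padicFract p (x + y) = padicFract p x + padicFract p y - k := by linarith
    rw [this]; push_cast; ring
  rw [this]; push_cast; ring

lemma eChar_eq_one {x : ℚ_[p]} : eChar p x = 1 ↔ ‖x‖ ≤ 1 := by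
  have hs := pf_sub p x
  unfold eChar
  rw [Complex.exp_eq_one_iff]
  constructor
  · rintro ⟨k, hk⟩
    have : (padicFract p x : ℂ) = k := by
      have := Complex.two_pi_I_ne_zero
      apply mul_left_cancel₀ this
      rw [hk]; ring
    have : padicFract p x = k := by exact_mod_cast this
    rw [this] at hs
    have h2 : x = (x - ((k : ℚ) : ℚ_[p])) + (k : ℚ_[p]) := by push_cast; ring
    rw [h2]
    exact (Padic.nonarchimedean _ _).trans (max_le hs (Padic.norm_int_le_one k))
  · intro h
    obtain ⟨a, m, -, ea⟩ := pf_form p x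
    obtain ⟨k, hk⟩ := rat_int p (q := padicFract p x) (a := a) (m := m) (by simpa using ea) (by
      have : (padicFract p x : ℚ_[p]) = x - (x - padicFract p x) := by ring
      rw [this]
      exact nsub p h hs)
    exact ⟨k, by rw [hk]; push_cast; ring⟩

lemma eChar_norm (x : ℚ_[p]) : ‖eChar p x‖ = 1 := by
  unfold eChar
  rw [show 2 * (Real.pi : ℂ) * Complex.I * (padicFract p x : ℂ) =
    ((2 * Real.pi * (padicFract p x : ℝ) : ℝ) : ℂ) * Complex.I by push_cast; ring]
  exact Complex.norm_exp_ofReal_mul_I _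

lemma eChar_zero : eChar p 0 = 1 := (eChar_eq_one p).2 (by simp)

lemma eChar_conj (x : ℚ_[p]) : (starRingEnd ℂ) (eChar p x) = eChar p (-x) := by
  have h1 : eChar p x * eChar p (-x) = 1 := by rw [← eChar_add, add_neg_cancel, eChar_zero]
  rw [← Complex.inv_eq_conj (eChar_norm p x)]
  exact (eq_inv_of_mul_eq_one_right h1).symm

lemma fr_unique {x y : ℚ_[p]} (hx : (padicFract p x : ℚ_[p]) = x)
    (hy : (padicFract p y : ℚ_[p]) = y) (h : ‖x - y‖ ≤ 1) : x = y := by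
  obtain ⟨a, m, -, ea⟩ := pf_form p x
  obtain ⟨b, l, -, eb⟩ := pf_form p y
  have hp : (p : ℚ) ≠ 0 := by exact_mod_cast (Fact.out : p.Prime).ne_zero
  obtain ⟨k, hk⟩ := rat_int p (q := padicFract p x - padicFract p y)
    (a := (a * p ^ l - b * p ^ m : ℤ)) (m := m + l) (by
      rw [ea, eb]; push_cast; field_simp; ring) (by push_cast; rw [hx, hy]; exact h)
  have h1 := pf_nonneg p x
  have h2 := pf_nonneg p y
  have h3 := pf_lt_one p x
  have h4 := pf_lt_one p y
  have h5 : (k : ℚ) < 1 := by linarith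
  have h6 : (-1 : ℚ) < k := by linarith
  have h7 : k < 1 := by exact_mod_cast h5
  have h8 : -1 < k := by exact_mod_cast h6
  have h9 : k = 0 := by omega
  rw [h9, Int.cast_zero, sub_eq_zero] at hk
  rw [← hx, ← hy, hk]

lemma fr_zero : (padicFract p (0 : ℚ_[p]) : ℚ_[p]) = 0 := by
  have h := PadicInt.appr_lt (padicToInt p 0) 0
  rw [pow_zero, Nat.lt_one_iff] at h
  simp [padicFract, h]

lemma fr_nat {a m : ℕ} (h : a < p ^ m) :
    padicFract p ((a : ℚ_[p]) / (p : ℚ_[p]) ^ m) = (a : ℚ) / (p : ℚ) ^ m := by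
  set x := (a : ℚ_[p]) / (p : ℚ_[p]) ^ m with hxd
  obtain ⟨b, l, -, eb⟩ := pf_form p x
  have hp : (p : ℚ) ≠ 0 := by exact_mod_cast (Fact.out : p.Prime).ne_zero
  have hp0 : (0 : ℚ) < p := by exact_mod_cast (Fact.out : p.Prime).pos
  obtain ⟨k, hk⟩ := rat_int p (q := (a : ℚ) / (p : ℚ) ^ m - padicFract p x)
    (a := (a * p ^ l - b * p ^ m : ℤ)) (m := m + l) (by
      rw [eb]; push_cast; field_simp; ring) (by
        have := pf_sub p x
        push_cast; exact this)
  have h1 : (0 : ℚ) ≤ (a : ℚ) / (p : ℚ) ^ m := by positivity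
  have h2 := pf_nonneg p x
  have h3 : (a : ℚ) / (p : ℚ) ^ m < 1 := by
    rw [div_lt_one (by positivity)]; exact_mod_cast h
  have h4 := pf_lt_one p x
  have h5 : (k : ℚ) < 1 := by linarith
  have h6 : (-1 : ℚ) < k := by linarith
  have h7 : k < 1 := by exact_mod_cast h5
  have h8 : -1 < k := by exact_mod_cast h6
  have h9 : k = 0 := by omega
  rw [h9, Int.cast_zero, sub_eq_zero] at hk
  exact hk.symm

def RR (m : ℕ) : Set ℚ_[p] := {x | ‖x‖ ≤ (p : ℝ) ^ (m : ℤ) ∧ (padicFract p x : ℚ_[p]) = x}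

lemma RR_eq (m : ℕ) :
    RR p m = (fun a : ℕ => (a : ℚ_[p]) / (p : ℚ_[p]) ^ m) '' (Finset.range (p ^ m) : Set ℕ) := by
  have hp : (p : ℚ) ≠ 0 := by exact_mod_cast (Fact.out : p.Prime).ne_zero
  have hp0 : (0 : ℚ) < p := by exact_mod_cast (Fact.out : p.Prime).pos
  ext x
  simp only [RR, Set.mem_ofPred_eq, Set.mem_image, Finset.coe_range, Set.mem_Iio]
  constructor
  · rintro ⟨h1, h2⟩
    obtain ⟨b, l, -, eb⟩ := pf_form p x
    have h3 := (norm_mul_pow_le p (m := m) _).2 h1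
    rw [sub_self, zpow_zero] at h3
    obtain ⟨k, hk⟩ := rat_int p (q := padicFract p x * (p : ℚ) ^ m) (a := (b * p ^ m : ℤ)) (m := l)
      (by rw [eb]; push_cast; ring) (by push_cast; rw [h2]; exact h3)
    have h4 : (0 : ℚ) ≤ k := by
      rw [← hk]; exact mul_nonneg (pf_nonneg p x) (by positivity)
    have h4' : 0 ≤ k := by exact_mod_cast h4
    obtain ⟨a, rfl⟩ := Int.eq_ofNat_of_zero_le h4'
    have h5 : ((a : ℤ) : ℚ) < (p : ℚ) ^ m := by
      rw [← hk]; exact mul_lt_of_lt_one_left (by positivity) (pf_lt_one p x)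
    refine ⟨a, by exact_mod_cast h5, ?_⟩
    rw [div_eq_iff (pow_ne_zero _ (pne p)), ← h2]
    have := congrArg (fun q : ℚ => (q : ℚ_[p])) hk
    push_cast at this
    exact this.symm
  · rintro ⟨a, ha, rfl⟩
    refine ⟨?_, ?_⟩
    · rw [← norm_mul_pow_le p (m := m), sub_self, zpow_zero,
        div_mul_cancel₀ _ (pow_ne_zero _ (pne p))]
      exact_mod_cast Padic.norm_int_le_one (p := p) a
    · rw [fr_nat p ha]; push_cast; rfl

lemma RR_ncard (m : ℕ) : (RR p m).ncard = p ^ m := by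
  rw [RR_eq, Set.ncard_image_of_injective, Set.ncard_coe_finset, Finset.card_range]
  intro a b h
  have := (div_left_inj' (pow_ne_zero m (pne p))).1 h
  exact_mod_cast this

lemma RR_finite (m : ℕ) : (RR p m).Finite := by
  rw [RR_eq]; exact Set.Finite.image _ (Finset.finite_toSet _)

def LL (n : ℕ) : Set ℚ_[p] := {l | (l = 1 ∨ (1 < ‖l‖ ∧ (padicFract p l : ℚ_[p]) = l)) ∧
    ‖l‖ ≤ (p : ℝ) ^ (n : ℤ)}

lemma LL_eq (n : ℕ) : LL p n = insert 1 (RR p n \ {0}) := by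
  ext x
  simp only [LL, RR, Set.mem_ofPred_eq, Set.mem_insert_iff, Set.mem_sdiff, Set.mem_singleton_iff]
  constructor
  · rintro ⟨h | ⟨h1, h2⟩, h3⟩
    · exact Or.inl h
    · refine Or.inr ⟨⟨h3, h2⟩, ?_⟩
      rintro rfl
      simp at h1; linarith
  · rintro (rfl | ⟨⟨h1, h2⟩, h3⟩)
    · refine ⟨Or.inl rfl, ?_⟩
      rw [norm_one]
      exact one_le_zpow₀ (pone p).le (by positivity)
    · refine ⟨Or.inr ⟨?_, h2⟩, h1⟩
      by_contra h
      exact h3 (fr_unique p h2 (fr_zero p) (by simpa using h))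

lemma LL_finite (n : ℕ) : (LL p n).Finite := by
  rw [LL_eq]; exact ((RR_finite p n).sdiff).insert _

lemma LL_ncard (n : ℕ) : (LL p n).ncard = p ^ n := by
  have h0 : (0 : ℚ_[p]) ∈ RR p n := by
    refine ⟨?_, fr_zero p⟩
    rw [norm_zero]; exact (zpow_pos (ppos p) _).le
  rw [LL_eq, Set.ncard_insert_of_notMem ?_ (RR_finite p n).sdiff, Set.ncard_sdiff_singleton_add_one h0 (RR_finite p n),
    RR_ncard]
  · rintro ⟨⟨-, h⟩, -⟩
    exact one_ne_zero (fr_unique p h (fr_zero p) (by simp))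

lemma LL_norm {n : ℕ} {l : ℚ_[p]} (h : l ∈ LL p n) : ‖l‖ = (p : ℝ) ^ (nLam p l : ℤ) := by
  have h1 : 1 ≤ ‖l‖ := by
    rcases h.1 with h | h
    · rw [h]; simp
    · exact h.1.le
  have h0 : l ≠ 0 := by rintro rfl; simp at h1; linarith
  have h2 := Padic.norm_eq_zpow_neg_valuation h0
  rw [h2] at h1 ⊢
  have : 0 ≤ -l.valuation := by
    by_contra hc
    have := zpow_lt_one_of_neg₀ (pone p) (not_le.1 hc)
    linarith
  unfold nLam
  rw [Int.toNat_of_nonneg this]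

lemma LL_le {n : ℕ} {l : ℚ_[p]} (h : l ∈ LL p n) : nLam p l ≤ n := by
  have h1 := LL_norm p h
  have h2 := h.2
  rw [h1] at h2
  have := (zpow_le_zpow_iff_right₀ (pone p)).1 h2
  omega

lemma LL_unique {n : ℕ} {l l' : ℚ_[p]} (h : l ∈ LL p n) (h' : l' ∈ LL p n)
    (hh : ‖l - l'‖ ≤ 1) : l = l' := by
  rcases h.1 with h | h <;> rcases h'.1 with h' | h'
  · rw [h, h']
  · exfalso
    have : l' = l - (l - l') := by ring
    have h3 : ‖l - (l - l')‖ ≤ 1 := nsub p (by simp [h]) hh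
    rw [← this] at h3
    linarith [h'.1]
  · exfalso
    have : l = (l - l') + l' := by ring
    have h3 := Padic.nonarchimedean (l - l') l'
    rw [← this] at h3
    have : max ‖l - l'‖ ‖l'‖ ≤ 1 := max_le hh (by simp [h'])
    linarith [h.1]
  · exact fr_unique p h.2 h'.2 hh

def XX (n k : ℕ) : Set ℚ_[p] := {x | ‖x‖ ≤ (p : ℝ) ^ (n : ℤ) ∧
      (padicFract p (x * (p : ℚ_[p]) ^ k) : ℚ_[p]) = x * (p : ℚ_[p]) ^ k}

lemma XX_eq {n k : ℕ} (h : k ≤ n) :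
    XX p n k = (fun y : ℚ_[p] => y / (p : ℚ_[p]) ^ k) '' RR p (n - k) := by
  have hp := pow_ne_zero k (pne p)
  ext x
  constructor
  · rintro ⟨h1, h2⟩
    refine ⟨x * (p : ℚ_[p]) ^ k, ⟨?_, h2⟩, mul_div_cancel_right₀ _ hp⟩
    rw [Nat.cast_sub h, norm_mul_pow_le]; exact h1
  · rintro ⟨y, ⟨h1, h2⟩, rfl⟩
    refine ⟨?_, ?_⟩
    · rw [← norm_mul_pow_le p (m := k), ← Nat.cast_sub h]
      simpa only [div_mul_cancel₀ _ hp] using h1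
    · simpa only [div_mul_cancel₀ _ hp] using h2

lemma XX_ncard {n k : ℕ} (h : k ≤ n) : (XX p n k).ncard = p ^ (n - k) := by
  rw [XX_eq p h, Set.ncard_image_of_injective, RR_ncard]
  intro a b h
  exact (div_left_inj' (pow_ne_zero k (pne p))).1 h

lemma XX_finite {n k : ℕ} (h : k ≤ n) : (XX p n k).Finite := by
  rw [XX_eq p h]; exact (RR_finite p _).image _

def idxEquiv (n : ℕ) : {t // GoodIdx p d n t} ≃
    Σ l : LL p n, (Fin d → XX p n (nLam p l)) × (Fin d → XX p n (nLam p l)) ×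
      (Fin d → Fin (p ^ nLam p (l : ℚ_[p]))) × (Fin d → Fin (p ^ nLam p (l : ℚ_[p]))) where
  toFun t := ⟨⟨t.1.2.2.1, t.2.1, t.2.2.1⟩, fun i => ⟨t.1.1 i, t.2.2.2.1 i⟩,
    fun i => ⟨t.1.2.1 i, t.2.2.2.2.1 i⟩, fun i => ⟨t.1.2.2.2.1 i, t.2.2.2.2.2.1 i⟩,
    fun i => ⟨t.1.2.2.2.2 i, t.2.2.2.2.2.2 i⟩⟩
  invFun s := ⟨(fun i => s.2.1 i, fun i => s.2.2.1 i, s.1, fun i => s.2.2.2.1 i,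
    fun i => s.2.2.2.2 i), s.1.2.1, s.1.2.2, fun i => (s.2.1 i).2, fun i => (s.2.2.1 i).2,
    fun i => (s.2.2.2.1 i).2, fun i => (s.2.2.2.2 i).2⟩
  left_inv t := rfl
  right_inv s := rfl

lemma idx_finite (n : ℕ) : Finite {t // GoodIdx p d n t} := by
  have := (LL_finite p n).to_subtype
  have : ∀ l : LL p n, Finite (XX p n (nLam p l)) := fun l =>
    (XX_finite p (LL_le p l.2)).to_subtype
  exact Finite.of_equiv _ (idxEquiv p d n).symm

lemma idx_card (n : ℕ) : Nat.card {t // GoodIdx p d n t} = p ^ (n * (2 * d + 1)) := by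
  have := (LL_finite p n).to_subtype
  have : ∀ l : LL p n, Finite (XX p n (nLam p l)) := fun l =>
    (XX_finite p (LL_le p l.2)).to_subtype
  have := Fintype.ofFinite (LL p n)
  rw [Nat.card_congr (idxEquiv p d n), Nat.card_sigma]
  rw [Finset.sum_congr rfl (g := fun _ => p ^ (2 * n * d))]
  · rw [Finset.sum_const, Finset.card_univ, ← Nat.card_eq_fintype_card, Nat.card_coe_set_eq,
      LL_ncard, smul_eq_mul, ← pow_add]
    congr 1; ring
  · intro l _
    have hl := LL_le p l.2
    simp only [Nat.card_prod, Nat.card_fun, Nat.card_coe_set_eq, XX_ncard p hl]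
    rw [Nat.card_eq_fintype_card (α := Fin d), Nat.card_eq_fintype_card (α := Fin (p ^ _)),
      Fintype.card_fin, Fintype.card_fin]
    obtain ⟨r, hr⟩ := Nat.exists_eq_add_of_le hl
    have : n - nLam p (l : ℚ_[p]) = r := by omega
    rw [this]
    simp only [← pow_mul, ← pow_add]
    congr 1
    generalize nLam p (l : ℚ_[p]) = k at hr
    subst hr; ring

lemma Zadd {x y : ℤ_[p]} {c : ℝ} (hx : ‖x‖ ≤ c) (hy : ‖y‖ ≤ c) : ‖x + y‖ ≤ c :=
  (PadicInt.nonarchimedean _ _).trans (max_le hx hy)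

lemma Zsub {x y : ℤ_[p]} {c : ℝ} (hx : ‖x‖ ≤ c) (hy : ‖y‖ ≤ c) : ‖x - y‖ ≤ c := by
  rw [sub_eq_add_neg]
  exact Zadd p hx (by rwa [norm_neg])

lemma dotZ_norm {x y : Fin d → ℤ_[p]} {c : ℝ} (hc : 0 ≤ c) (hy : ∀ i, ‖y i‖ ≤ c) :
    ‖dotZ p d x y‖ ≤ c := by
  unfold dotZ
  refine Finset.sum_induction (fun i => x i * y i) (fun u => ‖u‖ ≤ c) (fun a b => Zadd p)
    (by simpa using hc) (fun i _ => ?_)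
  rw [norm_mul]
  exact (mul_le_of_le_one_left (norm_nonneg _) (PadicInt.norm_le_one _)).trans (hy i)

lemma dotQZ_norm {x : Fin d → ℚ_[p]} {y : Fin d → ℤ_[p]} {n : ℕ}
    (hx : ∀ i, ‖x i‖ ≤ (p : ℝ) ^ (n : ℤ)) (hy : ∀ i, ‖y i‖ ≤ (p : ℝ) ^ (-(n : ℤ))) :
    ‖dotQZ p d x y‖ ≤ 1 := by
  unfold dotQZ
  refine Finset.sum_induction (fun i => x i * (y i : ℚ_[p])) (fun u => ‖u‖ ≤ 1) (fun a b => nadd p)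
    (by simp) (fun i _ => ?_)
  rw [norm_mul]
  refine (mul_le_mul (hx i) (hy i) (norm_nonneg _) (zpow_pos (ppos p) _).le).trans ?_
  rw [← zpow_add₀ (ppos p).ne']; simp

lemma Dn_congr {n : ℕ} {f : Heis p d → ℂ} (hf : f ∈ Dn p d n) {g g' : Heis p d}
    (hx : ∀ i, ‖g'.x i - g.x i‖ ≤ (p : ℝ) ^ (-(n : ℤ)))
    (hy : ∀ i, ‖g'.y i - g.y i‖ ≤ (p : ℝ) ^ (-(n : ℤ)))
    (hz : ‖g'.z - g.z‖ ≤ (p : ℝ) ^ (-(n : ℤ))) : f g' = f g := by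
  have := hf g ⟨g'.x - g.x, g'.y - g.y, g'.z - g.z - dotZ p d g.x (g'.y - g.y)⟩
    ⟨hx, hy, Zsub p hz (dotZ_norm p d (zpow_pos (ppos p) _).le hy)⟩
  rw [← this]
  congr 1
  rw [heis_mul_def]
  ext
  · simp
  · simp
  · simp only; ring

lemma Dn_continuous {n : ℕ} {f : Heis p d → ℂ} (hf : f ∈ Dn p d n) : Continuous f := by
  have hm : Continuous (fun g : Heis p d => (g.x, g.y, g.z)) := continuous_induced_dom
  have hx : Continuous (fun g : Heis p d => g.x) := continuous_fst.comp hm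
  have hy : Continuous (fun g : Heis p d => g.y) := (continuous_fst.comp continuous_snd).comp hm
  have hz : Continuous (fun g : Heis p d => g.z) := (continuous_snd.comp continuous_snd).comp hm
  have hpos : (0 : ℝ) < (p : ℝ) ^ (-(n : ℤ)) := zpow_pos (ppos p) _
  rw [continuous_iff_continuousAt]
  intro g
  refine ContinuousAt.congr (f := fun _ => f g) continuousAt_const ?_
  have e1 : ∀ᶠ g' in nhds g, ∀ i, ‖g'.x i - g.x i‖ < (p : ℝ) ^ (-(n : ℤ)) := by
    rw [Filter.eventually_all]
    intro i
    have : Continuous (fun g' : Heis p d => ‖g'.x i - g.x i‖) := by fun_prop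
    exact this.continuousAt.eventually_lt continuousAt_const (by simpa using hpos)
  have e2 : ∀ᶠ g' in nhds g, ∀ i, ‖g'.y i - g.y i‖ < (p : ℝ) ^ (-(n : ℤ)) := by
    rw [Filter.eventually_all]
    intro i
    have : Continuous (fun g' : Heis p d => ‖g'.y i - g.y i‖) := by fun_prop
    exact this.continuousAt.eventually_lt continuousAt_const (by simpa using hpos)
  have e3 : ∀ᶠ g' in nhds g, ‖g'.z - g.z‖ < (p : ℝ) ^ (-(n : ℤ)) := by
    have : Continuous (fun g' : Heis p d => ‖g'.z - g.z‖) := by fun_prop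
    exact this.continuousAt.eventually_lt continuousAt_const (by simpa using hpos)
  filter_upwards [e1, e2, e3] with g' h1 h2 h3
  exact (Dn_congr p d hf (fun i => (h1 i).le) (fun i => (h2 i).le) h3.le).symm

def resMap (n : ℕ) : Dn p d n →ₗ[ℂ]
    ((Fin d → Fin (p ^ n)) × (Fin d → Fin (p ^ n)) × Fin (p ^ n) → ℂ) where
  toFun f := fun r => f.1 ⟨fun i => ((r.1 i : ℕ) : ℤ_[p]), fun i => ((r.2.1 i : ℕ) : ℤ_[p]),
    ((r.2.2 : ℕ) : ℤ_[p])⟩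
  map_add' f g := rfl
  map_smul' c f := rfl

lemma appr_norm (z : ℤ_[p]) (n : ℕ) : ‖z - (z.appr n : ℤ_[p])‖ ≤ (p : ℝ) ^ (-(n : ℤ)) := by
  rw [PadicInt.norm_le_pow_iff_mem_span_pow]
  exact PadicInt.appr_spec n z

lemma Dn_appr {n : ℕ} {f : Heis p d → ℂ} (hf : f ∈ Dn p d n) (g : Heis p d) :
    f g = f ⟨fun i => (((g.x i).appr n : ℕ) : ℤ_[p]), fun i => (((g.y i).appr n : ℕ) : ℤ_[p]),
      ((g.z.appr n : ℕ) : ℤ_[p])⟩ :=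
  Dn_congr p d hf (fun i => appr_norm p (g.x i) n) (fun i => appr_norm p (g.y i) n)
    (appr_norm p g.z n)

lemma resMap_inj (n : ℕ) : Function.Injective (resMap p d n) := by
  intro f f' h
  ext g
  have := congrFun h (fun i => ⟨(g.x i).appr n, PadicInt.appr_lt _ _⟩,
    fun i => ⟨(g.y i).appr n, PadicInt.appr_lt _ _⟩, ⟨g.z.appr n, PadicInt.appr_lt _ _⟩)
  rw [Dn_appr p d f.2 g, Dn_appr p d f'.2 g]
  exact this

lemma Dn_fd (n : ℕ) : FiniteDimensional ℂ (Dn p d n) :=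
  FiniteDimensional.of_injective _ (resMap_inj p d n)

lemma Dn_finrank (n : ℕ) : Module.finrank ℂ (Dn p d n) ≤ p ^ (n * (2 * d + 1)) := by
  have := LinearMap.finrank_le_finrank_of_injective (resMap_inj p d n)
  refine this.trans (le_of_eq ?_)
  simp only [Module.finrank_fintype_fun_eq_card, Fintype.card_prod, Fintype.card_fun,
    Fintype.card_fin]
  rw [← pow_mul, ← pow_add, ← pow_add]
  congr 1; ring

lemma dotQZ_add (ξ : Fin d → ℚ_[p]) (x y : Fin d → ℤ_[p]) :
    dotQZ p d ξ (x + y) = dotQZ p d ξ x + dotQZ p d ξ y := by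
  simp [dotQZ, mul_add, Finset.sum_add_distrib]

lemma dotQZ_zero (ξ : Fin d → ℚ_[p]) : dotQZ p d ξ 0 = 0 := by simp [dotQZ]

lemma dotQZ_single (ξ : Fin d → ℚ_[p]) (i : Fin d) (b : ℤ_[p]) :
    dotQZ p d ξ (Pi.single i b) = ξ i * b := by
  unfold dotQZ
  rw [Finset.sum_eq_single i]
  · simp
  · intro j _ hj; simp [hj]
  · simp

lemma dotZ_add (ξ : Fin d → ℤ_[p]) (x y : Fin d → ℤ_[p]) :
    dotZ p d ξ (x + y) = dotZ p d ξ x + dotZ p d ξ y := by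
  simp [dotZ, mul_add, Finset.sum_add_distrib]

lemma dotZ_zero (ξ : Fin d → ℤ_[p]) : dotZ p d ξ 0 = 0 := by simp [dotZ]

lemma zero_dotZ (ξ : Fin d → ℤ_[p]) : dotZ p d 0 ξ = 0 := by simp [dotZ]

lemma dotZ_single (ξ : Fin d → ℤ_[p]) (i : Fin d) (b : ℤ_[p]) :
    dotZ p d ξ (Pi.single i b) = ξ i * b := by
  unfold dotZ
  rw [Finset.sum_eq_single i]
  · simp
  · intro j _ hj; simp [hj]
  · simp

/-- The phase of a matrix coefficient. -/
def ph (ξ η : Fin d → ℚ_[p]) (lam : ℚ_[p]) (h' : Fin d → ℕ) (g : Heis p d) : ℚ_[p] :=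
  dotQZ p d ξ g.x + dotQZ p d η g.y +
      lam * ((g.z : ℚ_[p]) + (dotZ p d (fun i => ((h' i : ℕ) : ℤ_[p])) g.y : ℚ_[p]))

lemma ph_mul (ξ η : Fin d → ℚ_[p]) (lam : ℚ_[p]) (h' : Fin d → ℕ) (g₀ g : Heis p d) :
    ph p d ξ η lam h' (g₀ * g) = ph p d ξ η lam h' g + ph p d ξ η lam h' g₀ +
      lam * (dotZ p d g₀.x g.y : ℚ_[p]) := by
  simp only [ph, heis_mul_def, dotQZ_add, dotZ_add]
  push_cast
  ring

/-- The difference vector `h - h'` as a p-adic vector. -/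
def dif (h h' : Fin d → ℕ) : Fin d → ℤ_[p] :=
  (fun i => ((h i : ℕ) : ℤ_[p])) - fun i => ((h' i : ℕ) : ℤ_[p])

lemma matCoeffN_eq (ξ η : Fin d → ℚ_[p]) (lam : ℚ_[p]) (h h' : Fin d → ℕ) (g : Heis p d) :
    matCoeffN p d ξ η lam h h' g = (Real.sqrt ((p : ℝ) ^ (nLam p lam * d)) : ℂ) *
      (eChar p (ph p d ξ η lam h' g) * indC p d (nLam p lam) (dif p d h h') g.x) := rfl

lemma indC_eq (n : ℕ) (h u : Fin d → ℤ_[p]) :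
    indC p d n h u = if ∀ i, ‖u i - h i‖ ≤ (p : ℝ) ^ (-(n : ℤ)) then 1 else 0 := by
  unfold indC
  rw [Set.indicator_apply]
  rfl

lemma indC_trans (n : ℕ) (h u v : Fin d → ℤ_[p]) :
    indC p d n h (v + u) = indC p d n (h - v) u := by
  rw [indC_eq, indC_eq]
  congr 1
  refine propext (forall_congr' fun i => ?_)
  simp only [Pi.add_apply, Pi.sub_apply]
  rw [show v i + u i - h i = u i - (h i - v i) by ring]

lemma indC_inv {n : ℕ} (h u v : Fin d → ℤ_[p]) (hv : ∀ i, ‖v i‖ ≤ (p : ℝ) ^ (-(n : ℤ))) :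
    indC p d n h (v + u) = indC p d n h u := by
  rw [indC_eq, indC_eq]
  congr 1
  refine propext (forall_congr' fun i => ?_)
  simp only [Pi.add_apply]
  constructor
  · intro hh
    rw [show u i - h i = (v i + u i - h i) - v i by ring]
    exact Zsub p hh (hv i)
  · intro hh
    rw [show v i + u i - h i = (u i - h i) + v i by ring]
    exact Zadd p hh (hv i)

lemma indC_mul_self (n : ℕ) (h u : Fin d → ℤ_[p]) :
    indC p d n h u * indC p d n h u = indC p d n h u := by
  rw [indC_eq]; split_ifs <;> simp

lemma indC_conj (n : ℕ) (h u : Fin d → ℤ_[p]) :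
    (starRingEnd ℂ) (indC p d n h u) = indC p d n h u := by
  rw [indC_eq]; split_ifs <;> simp

lemma indC_norm (n : ℕ) (h u : Fin d → ℤ_[p]) : ‖indC p d n h u‖ ≤ 1 := by
  rw [indC_eq]; split_ifs <;> simp

lemma nat_eq_of_norm {a b k : ℕ} (ha : a < p ^ k) (hb : b < p ^ k)
    (h : ‖(a : ℤ_[p]) - b‖ ≤ (p : ℝ) ^ (-(k : ℤ))) : a = b := by
  have h1 : ‖((a - b : ℤ) : ℤ_[p])‖ ≤ (p : ℝ) ^ (-(k : ℤ)) := by push_cast; exact h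
  rw [PadicInt.norm_int_le_pow_iff_dvd] at h1
  have := (Nat.modEq_iff_dvd (n := p ^ k) (a := b) (b := a)).2 (by push_cast; exact_mod_cast h1)
  exact (Nat.ModEq.eq_of_lt_of_lt this hb ha).symm

lemma indC_sum (k : ℕ) (u : Fin d → ℤ_[p]) :
    ∑ r : Fin d → Fin (p ^ k), indC p d k (fun i => ((r i : ℕ) : ℤ_[p])) u = 1 := by
  rw [Finset.sum_eq_single (fun i => ⟨(u i).appr k, PadicInt.appr_lt _ _⟩)]
  · rw [indC_eq, if_pos]
    intro i
    exact appr_norm p (u i) k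
  · intro r _ hr
    rw [indC_eq, if_neg]
    intro hh
    apply hr
    ext i
    apply nat_eq_of_norm p (r i).2 (PadicInt.appr_lt _ _)
    have h1 := appr_norm p (u i) k
    have := Zsub p h1 (hh i)
    simpa using this
  · simp

lemma mul_cont (g₀ : Heis p d) : Continuous (fun g : Heis p d => g₀ * g) := by
  have hm : Continuous (fun g : Heis p d => (g.x, g.y, g.z)) := continuous_induced_dom
  have hx : Continuous (fun g : Heis p d => g.x) := continuous_fst.comp hm
  have hy : Continuous (fun g : Heis p d => g.y) := (continuous_fst.comp continuous_snd).comp hm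
  have hz : Continuous (fun g : Heis p d => g.z) := (continuous_snd.comp continuous_snd).comp hm
  rw [continuous_induced_rng]
  change Continuous fun g : Heis p d => (g₀.x + g.x, g₀.y + g.y, g₀.z + g.z + ∑ i, g₀.x i * g.y i)
  fun_prop

lemma int_inv (μH : MeasureTheory.Measure (Heis p d))
    (hinvH : ∀ g₀ : Heis p d, μH.map (g₀ * ·) = μH) (g₀ : Heis p d) (F : Heis p d → ℂ) :
    ∫ g, F (g₀ * g) ∂μH = ∫ g, F g ∂μH := by
  let e : Heis p d ≃ᵐ Heis p d :=
    { Equiv.mulLeft g₀ with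
      measurable_toFun := (mul_cont p d g₀).measurable
      measurable_invFun := (mul_cont p d g₀⁻¹).measurable }
  have h := MeasureTheory.integral_map_equiv (μ := μH) e F
  have h2 : μH.map e = μH := hinvH g₀
  rw [h2] at h
  exact h.symm

lemma int_zero (μH : MeasureTheory.Measure (Heis p d))
    (hinvH : ∀ g₀ : Heis p d, μH.map (g₀ * ·) = μH) (g₀ : Heis p d) (F : Heis p d → ℂ)
    (c : ℂ) (hc : c ≠ 1) (hF : ∀ g, F (g₀ * g) = c * F g) : ∫ g, F g ∂μH = 0 := by
  have h := int_inv p d μH hinvH g₀ F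
  simp only [hF] at h
  rw [MeasureTheory.integral_const_mul] at h
  have : (c - 1) * ∫ g, F g ∂μH = 0 := by linear_combination h
  rcases mul_eq_zero.1 this with h | h
  · exact absurd (sub_eq_zero.1 h) hc
  · exact h

lemma orth_zero (μH : MeasureTheory.Measure (Heis p d))
    (hinvH : ∀ g₀ : Heis p d, μH.map (g₀ * ·) = μH) (g₀ : Heis p d)
    (ξ η : Fin d → ℚ_[p]) (lam : ℚ_[p]) (h h' : Fin d → ℕ)
    (ξ' η' : Fin d → ℚ_[p]) (lam' : ℚ_[p]) (k k' : Fin d → ℕ) (δ : ℚ_[p]) (hδ : ¬ ‖δ‖ ≤ 1)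
    (hph : ∀ g, ph p d ξ η lam h' (g₀ * g) - ph p d ξ' η' lam' k' (g₀ * g) =
      δ + (ph p d ξ η lam h' g - ph p d ξ' η' lam' k' g))
    (h1 : ∀ i, ‖g₀.x i‖ ≤ (p : ℝ) ^ (-(nLam p lam : ℤ)))
    (h2 : ∀ i, ‖g₀.x i‖ ≤ (p : ℝ) ^ (-(nLam p lam' : ℤ))) :
    ∫ g, matCoeffN p d ξ η lam h h' g *
          (starRingEnd ℂ) (matCoeffN p d ξ' η' lam' k k' g) ∂μH = 0 := by
  refine int_zero p d μH hinvH g₀ _ (eChar p δ) (fun hh => hδ ((eChar_eq_one p).1 hh)) ?_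
  intro g
  have e : ∀ g, eChar p (ph p d ξ η lam h' g) * eChar p (-ph p d ξ' η' lam' k' g) =
      eChar p (ph p d ξ η lam h' g - ph p d ξ' η' lam' k' g) := fun g => by
    rw [← eChar_add, sub_eq_add_neg]
  have e1 := e (g₀ * g)
  rw [hph, eChar_add, ← e] at e1
  simp only [matCoeffN_eq, map_mul, eChar_conj, indC_conj]
  rw [show (g₀ * g).x = g₀.x + g.x from rfl, indC_inv p d _ _ _ h1, indC_inv p d _ _ _ h2]
  linear_combination (Real.sqrt ((p : ℝ) ^ (nLam p lam * d)) : ℂ) *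
    (starRingEnd ℂ) (Real.sqrt ((p : ℝ) ^ (nLam p lam' * d)) : ℂ) *
    indC p d (nLam p lam) (dif p d h h') g.x * indC p d (nLam p lam') (dif p d k k') g.x * e1

lemma matCoeffN_mem {n : ℕ} {t} (ht : GoodIdx p d n t) :
    matCoeffN p d t.1 t.2.1 t.2.2.1 t.2.2.2.1 t.2.2.2.2 ∈ Dn p d n := by
  obtain ⟨ξ, η, lam, h, h'⟩ := t
  obtain ⟨g1, g2, g3, g4, g5, g6⟩ := ht
  simp only at g1 g2 g3 g4 g5 g6 ⊢
  have hl : lam ∈ LL p n := ⟨g1, g2⟩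
  have hle := LL_le p hl
  rintro g r ⟨r1, r2, r3⟩
  have hlam : ∀ z : ℤ_[p], ‖z‖ ≤ (p : ℝ) ^ (-(n : ℤ)) → ‖lam * (z : ℚ_[p])‖ ≤ 1 := by
    intro z hz
    rw [norm_mul]
    refine (mul_le_mul g2 hz (norm_nonneg _) (zpow_pos (ppos p) _).le).trans ?_
    rw [← zpow_add₀ (ppos p).ne']; simp
  have hpos : (0 : ℝ) ≤ (p : ℝ) ^ (-(n : ℤ)) := (zpow_pos (ppos p) _).le
  have e1 : eChar p (ph p d ξ η lam h' r + lam * (dotZ p d g.x r.y : ℚ_[p])) = 1 := by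
    rw [eChar_eq_one]
    refine nadd p (nadd p (nadd p (dotQZ_norm p d (fun i => (g3 i).1) r1)
      (dotQZ_norm p d (fun i => (g4 i).1) r2)) ?_) (hlam _ (dotZ_norm p d hpos r2))
    rw [← PadicInt.coe_add]
    exact hlam _ (Zadd p r3 (dotZ_norm p d hpos r2))
  have e2 : ph p d ξ η lam h' r + ph p d ξ η lam h' g + lam * (dotZ p d g.x r.y : ℚ_[p]) =
    ph p d ξ η lam h' g + (ph p d ξ η lam h' r + lam * (dotZ p d g.x r.y : ℚ_[p])) := by ring
  rw [matCoeffN_eq, matCoeffN_eq, ph_mul, e2, eChar_add, e1, mul_one,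
    show (g * r).x = r.x + g.x from add_comm _ _, indC_inv]
  · intro i
    exact (r1 i).trans (zpow_le_zpow_right₀ (pone p).le (by omega))

lemma matCoeffN_int {n : ℕ} (μH : MeasureTheory.Measure (Heis p d)) (hprobH : μH Set.univ = 1)
    {t t'} (ht : GoodIdx p d n t) (ht' : GoodIdx p d n t') :
    Integrable (fun g => matCoeffN p d t.1 t.2.1 t.2.2.1 t.2.2.2.1 t.2.2.2.2 g *
          (starRingEnd ℂ) (matCoeffN p d t'.1 t'.2.1 t'.2.2.1 t'.2.2.2.1 t'.2.2.2.2 g)) μH := by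
  have : IsProbabilityMeasure μH := ⟨hprobH⟩
  have hc : Continuous (fun g => matCoeffN p d t.1 t.2.1 t.2.2.1 t.2.2.2.1 t.2.2.2.2 g *
          (starRingEnd ℂ) (matCoeffN p d t'.1 t'.2.1 t'.2.2.1 t'.2.2.2.1 t'.2.2.2.2 g)) :=
    (Dn_continuous p d (matCoeffN_mem p d ht)).mul
      (Complex.continuous_conj.comp (Dn_continuous p d (matCoeffN_mem p d ht')))
  have hb : ∀ ξ η lam h h' g, ‖matCoeffN p d ξ η lam h h' g‖ ≤
      Real.sqrt ((p : ℝ) ^ (nLam p lam * d)) := by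
    intro ξ η lam h h' g
    rw [matCoeffN_eq, norm_mul, norm_mul, eChar_norm, one_mul, Complex.norm_real, Real.norm_eq_abs,
      abs_of_nonneg (Real.sqrt_nonneg _)]
    exact mul_le_of_le_one_right (Real.sqrt_nonneg _) (indC_norm p d _ _ _)
  refine Integrable.of_bound hc.aestronglyMeasurable
    (Real.sqrt ((p : ℝ) ^ (nLam p t.2.2.1 * d)) * Real.sqrt ((p : ℝ) ^ (nLam p t'.2.2.1 * d)))
    (Filter.Eventually.of_forall fun g => ?_)
  rw [norm_mul, RCLike.norm_conj]
  exact mul_le_mul (hb _ _ _ _ _ _) (hb _ _ _ _ _ _) (norm_nonneg _) (Real.sqrt_nonneg _)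

lemma indC_mem (k : ℕ) (h : Fin d → ℤ_[p]) : (fun g : Heis p d => indC p d k h g.x) ∈ Dn p d k := by
  rintro g r ⟨r1, -, -⟩
  simp only
  rw [show (g * r).x = r.x + g.x from add_comm _ _, indC_inv p d _ _ _ r1]

lemma indC_integrable (k : ℕ) (h : Fin d → ℤ_[p]) (μH : MeasureTheory.Measure (Heis p d))
    (hprobH : μH Set.univ = 1) : Integrable (fun g : Heis p d => indC p d k h g.x) μH := by
  have : IsProbabilityMeasure μH := ⟨hprobH⟩
  exact Integrable.of_bound (Dn_continuous p d (indC_mem p d k h)).aestronglyMeasurable 1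
    (Filter.Eventually.of_forall fun g => indC_norm p d _ _ _)

lemma indC_integral (k : ℕ) (h : Fin d → ℤ_[p]) (μH : MeasureTheory.Measure (Heis p d))
    (hinvH : ∀ g₀ : Heis p d, μH.map (g₀ * ·) = μH) (hprobH : μH Set.univ = 1) :
    (p : ℂ) ^ (k * d) * ∫ g : Heis p d, indC p d k h g.x ∂μH = 1 := by
  have : IsProbabilityMeasure μH := ⟨hprobH⟩
  have hs : ∑ r : Fin d → Fin (p ^ k),
      ∫ g : Heis p d, indC p d k (fun i => ((r i : ℕ) : ℤ_[p])) g.x ∂μH = 1 := by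
    rw [← MeasureTheory.integral_finsetSum]
    · simp only [indC_sum]; simp
    · intro r _; exact indC_integrable p d k _ μH hprobH
  rw [Finset.sum_congr rfl (g := fun _ => ∫ g : Heis p d, indC p d k h g.x ∂μH)] at hs
  · rw [Finset.sum_const, Finset.card_univ, Fintype.card_fun, Fintype.card_fin, Fintype.card_fin,
      nsmul_eq_mul] at hs
    rw [← hs, pow_mul]; push_cast; rfl
  · intro r _
    rw [← int_inv p d μH hinvH ⟨(fun i => ((r i : ℕ) : ℤ_[p])) - h, 0, 0⟩
      (fun g => indC p d k (fun i => ((r i : ℕ) : ℤ_[p])) g.x)]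
    congr 1
    funext g
    change indC p d k (fun i => ((r i : ℕ) : ℤ_[p])) ((fun i => ((r i : ℕ) : ℤ_[p])) - h + g.x) = _
    rw [indC_trans, sub_sub_cancel]

lemma orthonormal_aux (n : ℕ)
    (μH : MeasureTheory.Measure (Heis p d))
    (hinvH : ∀ g₀ : Heis p d, μH.map (g₀ * ·) = μH) (hprobH : μH Set.univ = 1) :
    (∀ t t', GoodIdx p d n t → GoodIdx p d n t' →
      ∫ g, matCoeffN p d t.1 t.2.1 t.2.2.1 t.2.2.2.1 t.2.2.2.2 g *
          (starRingEnd ℂ) (matCoeffN p d t'.1 t'.2.1 t'.2.2.1 t'.2.2.2.1 t'.2.2.2.2 g) ∂μH =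
        if t = t' then 1 else 0) := by
  rintro ⟨ξ, η, lam, h, h'⟩ ⟨ξ', η', lam', k, k'⟩ ⟨g1, g2, g3, g4, g5, g6⟩ ⟨f1, f2, f3, f4, f5, f6⟩
  simp only at g1 g2 g3 g4 g5 g6 f1 f2 f3 f4 f5 f6 ⊢
  have hl : lam ∈ LL p n := ⟨g1, g2⟩
  have hl' : lam' ∈ LL p n := ⟨f1, f2⟩
  have hz : ∀ m : ℕ, ∀ i : Fin d, ‖(0 : Fin d → ℤ_[p]) i‖ ≤ (p : ℝ) ^ (-(m : ℤ)) := by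
    intro m i
    rw [Pi.zero_apply, norm_zero]
    exact (zpow_pos (ppos p) _).le
  by_cases hll : lam = lam'
  swap
  · rw [if_neg (by simp [hll])]
    refine orth_zero p d μH hinvH ⟨0, 0, 1⟩ _ _ _ _ _ _ _ _ _ _ (lam - lam')
      (fun hh => hll (LL_unique p hl hl' hh)) ?_ (hz _) (hz _)
    intro g
    simp only [ph_mul]
    simp only [ph, dotQZ_zero, dotZ_zero, zero_dotZ]
    push_cast
    ring
  subst hll
  have hnl := LL_norm p hl
  set K := nLam p lam with hK
  have hscale : ∀ x : ℚ_[p], ‖x‖ ≤ (p : ℝ) ^ (K : ℤ) → ‖x * (p : ℚ_[p]) ^ K‖ ≤ 1 := by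
    intro x hx
    have := (norm_mul_pow_le p (m := K) (K : ℤ)).2 hx
    simpa using this
  have hcancel : ∀ x y : ℚ_[p], x * (p : ℚ_[p]) ^ K = y * (p : ℚ_[p]) ^ K → x = y := fun x y hh =>
    mul_right_cancel₀ (pow_ne_zero K (pne p)) hh
  by_cases hη : ∃ i, ¬ ‖(η i - η' i) + lam * ((h' i : ℚ_[p]) - (k' i : ℚ_[p]))‖ ≤ 1
  · obtain ⟨i, hi⟩ := hη
    rw [if_neg]
    · refine orth_zero p d μH hinvH ⟨0, Pi.single i 1, 0⟩ _ _ _ _ _ _ _ _ _ _ _ hi ?_ (hz _) (hz _)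
      intro g
      simp only [ph_mul]
      simp only [ph, dotQZ_zero, dotQZ_single, dotZ_single, zero_dotZ]
      push_cast
      ring
    · intro hh
      simp only [Prod.mk.injEq] at hh
      obtain ⟨-, e1, -, -, e2⟩ := hh
      apply hi
      rw [e1, e2]; simp
  push Not at hη
  have hηη : η = η' := by
    funext i
    apply hcancel
    apply fr_unique p (g4 i).2 (f4 i).2
    rw [← sub_mul]
    apply hscale
    have e : η i - η' i = ((η i - η' i) + lam * ((h' i : ℚ_[p]) - (k' i : ℚ_[p]))) -
      lam * (((h' i - k' i : ℤ) : ℚ_[p])) := by push_cast; ring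
    rw [e]
    refine nsub p ((hη i).trans (one_le_zpow₀ (pone p).le (by positivity))) ?_
    rw [norm_mul, hnl]
    exact mul_le_of_le_one_right (zpow_pos (ppos p) _).le (Padic.norm_int_le_one _)
  subst hηη
  have hhk : h' = k' := by
    funext i
    apply nat_eq_of_norm p (g6 i) (f6 i)
    have := hη i
    rw [sub_self, zero_add, norm_mul, hnl] at this
    rw [zpow_neg, ← one_div, le_div_iff₀ (zpow_pos (ppos p) _), mul_comm]
    have e : ‖((h' i : ℕ) : ℤ_[p]) - ((k' i : ℕ) : ℤ_[p])‖ = ‖(h' i : ℚ_[p]) - (k' i : ℚ_[p])‖ := by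
      rw [PadicInt.norm_def]; push_cast; rfl
    rw [e]; exact this
  subst hhk
  by_cases hh : h = k
  swap
  · rw [if_neg (by simp [hh])]
    rw [show (fun g => matCoeffN p d ξ η lam h h' g *
      (starRingEnd ℂ) (matCoeffN p d ξ' η lam k h' g)) = fun _ => 0 from ?_]
    · simp
    funext g
    simp only [matCoeffN_eq, map_mul, indC_conj]
    have : indC p d (nLam p lam) (dif p d h h') g.x * indC p d (nLam p lam) (dif p d k h') g.x = 0 := by
      by_contra hne
      apply hh
      rw [indC_eq, indC_eq] at hne
      split_ifs at hne with q1 q2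
      · funext i
        apply nat_eq_of_norm p (g5 i) (f5 i)
        have := Zsub p (q2 i) (q1 i)
        simpa [dif] using this
      all_goals simp at hne
    linear_combination (Real.sqrt ((p : ℝ) ^ (nLam p lam * d)) : ℂ) *
      (starRingEnd ℂ) (Real.sqrt ((p : ℝ) ^ (nLam p lam * d)) : ℂ) *
      eChar p (ph p d ξ η lam h' g) * (starRingEnd ℂ) (eChar p (ph p d ξ' η lam h' g)) * this
  subst hh
  by_cases hξ : ξ = ξ'
  · subst hξ
    rw [if_pos rfl]
    rw [← indC_integral p d K (dif p d h h') μH hinvH hprobH, ← MeasureTheory.integral_const_mul]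
    congr 1
    funext g
    simp only [matCoeffN_eq, map_mul, indC_conj, eChar_conj, Complex.conj_ofReal]
    have e1 : eChar p (ph p d ξ η lam h' g) * eChar p (-ph p d ξ η lam h' g) = 1 := by
      rw [← eChar_add, add_neg_cancel, eChar_zero]
    have e2 : (Real.sqrt ((p : ℝ) ^ (nLam p lam * d)) : ℂ) *
      (Real.sqrt ((p : ℝ) ^ (nLam p lam * d)) : ℂ) = (p : ℂ) ^ (nLam p lam * d) := by
      rw [← Complex.ofReal_mul, Real.mul_self_sqrt (pow_nonneg (ppos p).le _)]
      push_cast; rfl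
    have e3 := indC_mul_self p d (nLam p lam) (dif p d h h') g.x
    rw [← hK] at *
    calc _ = ((Real.sqrt ((p : ℝ) ^ (K * d)) : ℂ) * (Real.sqrt ((p : ℝ) ^ (K * d)) : ℂ)) *
          (eChar p (ph p d ξ η lam h' g) * eChar p (-ph p d ξ η lam h' g)) *
          (indC p d K (dif p d h h') g.x * indC p d K (dif p d h h') g.x) := by ring
      _ = _ := by rw [e1, e2, e3, mul_one]
  · rw [if_neg (by simp [hξ])]
    obtain ⟨i, hi⟩ := Function.ne_iff.1 hξ
    have hx : ∀ j, ‖(Pi.single i ((p : ℤ_[p]) ^ K) : Fin d → ℤ_[p]) j‖ ≤ (p : ℝ) ^ (-(K : ℤ)) := by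
      intro j
      by_cases hj : j = i
      · subst hj
        simp
      · rw [Pi.single_eq_of_ne hj, norm_zero]; exact (zpow_pos (ppos p) _).le
    refine orth_zero p d μH hinvH ⟨Pi.single i ((p : ℤ_[p]) ^ K), 0, 0⟩ _ _ _ _ _ _ _ _ _ _
      ((ξ i - ξ' i) * (p : ℚ_[p]) ^ K) ?_ ?_ hx hx
    · intro hn
      rw [sub_mul] at hn
      exact hi (hcancel _ _ (fr_unique p (g3 i).2 (f3 i).2 hn))
    · intro g
      simp only [ph_mul]
      simp only [ph, dotQZ_zero, dotQZ_single, dotZ_zero]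
      push_cast
      ring

/-- The normalized matrix coefficients `|λ|_p^{d/2}(π_{(ξ,η,λ)})_{hh'}`,
indexed by `GoodIdx n`, form an orthonormal family in `L²(H_d)` of cardinality
`p^{n(2d+1)}`, hence an orthonormal basis of `D_n(H_d)`. -/
theorem matCoeff_orthonormal_basis (n : ℕ)
    (μH : MeasureTheory.Measure (Heis p d))
    (hinvH : ∀ g₀ : Heis p d, μH.map (g₀ * ·) = μH) (hprobH : μH Set.univ = 1) :
    (∀ t t', GoodIdx p d n t → GoodIdx p d n t' →
      ∫ g, matCoeffN p d t.1 t.2.1 t.2.2.1 t.2.2.2.1 t.2.2.2.2 g *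
          (starRingEnd ℂ) (matCoeffN p d t'.1 t'.2.1 t'.2.2.1 t'.2.2.2.1 t'.2.2.2.2 g) ∂μH =
        if t = t' then 1 else 0) ∧
    Nat.card {t // GoodIdx p d n t} = p ^ (n * (2 * d + 1)) ∧
    Submodule.span ℂ {f : Heis p d → ℂ | ∃ t, GoodIdx p d n t ∧
        f = matCoeffN p d t.1 t.2.1 t.2.2.1 t.2.2.2.1 t.2.2.2.2} = Dn p d n := by
  have hO := orthonormal_aux p d n μH hinvH hprobH
  refine ⟨hO, idx_card p d n, ?_⟩
  have := idx_finite p d n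
  have := Fintype.ofFinite {t // GoodIdx p d n t}
  have := Dn_fd p d n
  let φ : {t // GoodIdx p d n t} → Heis p d → ℂ := fun t =>
    matCoeffN p d t.1.1 t.1.2.1 t.1.2.2.1 t.1.2.2.2.1 t.1.2.2.2.2
  have hset : {f : Heis p d → ℂ | ∃ t, GoodIdx p d n t ∧
        f = matCoeffN p d t.1 t.2.1 t.2.2.1 t.2.2.2.1 t.2.2.2.2} = Set.range φ := by
    ext f
    constructor
    · rintro ⟨t, ht, rfl⟩; exact ⟨⟨t, ht⟩, rfl⟩
    · rintro ⟨t, rfl⟩; exact ⟨t.1, t.2, rfl⟩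
  rw [hset]
  have hli : LinearIndependent ℂ φ := by
    rw [Fintype.linearIndependent_iff]
    intro c hc s
    have h0 : ∫ g, (∑ t, c t * (φ t g * (starRingEnd ℂ) (φ s g))) ∂μH = 0 := by
      have : (fun g => ∑ t, c t * (φ t g * (starRingEnd ℂ) (φ s g))) = fun _ => 0 := by
        funext g
        have h1 := congrFun hc g
        simp only [Finset.sum_apply, Pi.smul_apply, smul_eq_mul, Pi.zero_apply] at h1
        rw [← zero_mul ((starRingEnd ℂ) (φ s g)), ← h1, Finset.sum_mul]
        exact Finset.sum_congr rfl fun t _ => by ring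
      rw [this]; simp
    rw [MeasureTheory.integral_finsetSum] at h0
    · rw [Finset.sum_eq_single s] at h0
      · rw [MeasureTheory.integral_const_mul] at h0
        have h2 := hO s.1 s.1 s.2 s.2
        rw [if_pos rfl] at h2
        rw [show ∫ g, φ s g * (starRingEnd ℂ) (φ s g) ∂μH = 1 from h2, mul_one] at h0
        exact h0
      · intro t _ hts
        rw [MeasureTheory.integral_const_mul]
        have h2 := hO t.1 s.1 t.2 s.2
        rw [if_neg (fun h => hts (Subtype.ext h))] at h2
        rw [show ∫ g, φ t g * (starRingEnd ℂ) (φ s g) ∂μH = 0 from h2, mul_zero]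
      · simp
    · intro t _
      exact (matCoeffN_int p d μH hprobH t.2 s.2).const_mul _
  apply Submodule.eq_of_le_of_finrank_le
  · rw [Submodule.span_le]
    rintro _ ⟨t, rfl⟩
    exact matCoeffN_mem p d t.2
  · rw [finrank_span_eq_card hli, ← Nat.card_eq_fintype_card, idx_card]
    exact Dn_finrank p d n
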